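/- Let A be a 10×10 0-1 matrix with finite stable index. Then θ(A) = g(10) = 21 if and only if A is permutation similar to one of the following: (i) [[C_3, X],[0, C_7]] or [[C_7, X],[0, C_3]] where X is a 0-1 matrix with exactly one nonzero entry; (ii) [[C_4, u, 0],[0, 0, vᵀ],[0, 0, C_5]] or [[C_5, u, 0],[0, 0, vᵀ],[0, 0, C_4]] where u and v are 0-1 column vectors each having exactly one nonzero entry. -/

import Mathlib

/-- A matrix over ℕ is a 0-1 matrix iff all its entries are at most 1. -/
def IsZO {α β : Type*} (A : Matrix α β ℕ) : Prop := ∀ i j, A i j ≤ 1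

/-- The stable index of a 0-1 matrix: the smallest positive `k` with `A ^ (k+1)`
not a 0-1 matrix, or `⊤` if no such `k` exists. -/
noncomputable def theta {α : Type*} [Fintype α] [DecidableEq α]
    (A : Matrix α α ℕ) : ℕ∞ :=
  sInf ((fun k : ℕ => (k : ℕ∞)) '' {k : ℕ | 1 ≤ k ∧ ¬ IsZO (A ^ (k + 1))})

/-- `g(n)` from the paper. -/
def g (n : ℕ) : ℕ :=
  if n % 2 = 1 then (n ^ 2 - 1) / 4
  else if n % 4 = 0 then (n ^ 2 - 4) / 4
  else (n ^ 2 - 16) / 4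

/-- Basic circulant 0-1 matrix of order `n`. -/
def Cmat (n : ℕ) : Matrix (Fin n) (Fin n) ℕ :=
  Matrix.of fun i j => if (j : ℕ) = ((i : ℕ) + 1) % n then 1 else 0

/-- Condition (★) on `(n, p, q)`. -/
def StarCond (n p q : ℕ) : Prop :=
  p + q = n ∧
  ((n % 2 = 1 ∧ ({p, q} : Finset ℕ) = {(n + 1) / 2, (n - 1) / 2}) ∨
   (n % 4 = 0 ∧ ({p, q} : Finset ℕ) = {(n + 2) / 2, (n - 2) / 2}) ∨
   (n % 4 = 2 ∧ ({p, q} : Finset ℕ) = {(n + 4) / 2, (n - 4) / 2}))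

/-- The block matrix `[[C_p, u, 0], [0, 0, vᵀ], [0, 0, C_q]]`. -/
def Hmat (p q : ℕ) (u : Fin p → ℕ) (v : Fin q → ℕ) :
    Matrix (Fin p ⊕ Unit ⊕ Fin q) (Fin p ⊕ Unit ⊕ Fin q) ℕ :=
  Matrix.of fun i j =>
    match i, j with
    | Sum.inl a, Sum.inl b => Cmat p a b
    | Sum.inl a, Sum.inr (Sum.inl _) => u a
    | Sum.inr (Sum.inl _), Sum.inr (Sum.inr b) => v b
    | Sum.inr (Sum.inr a), Sum.inr (Sum.inr b) => Cmat q a b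
    | _, _ => 0

/-!
Let `A` be a 0-1 matrix of order `n ≥ 9` with stable index `N = g n`. The entries of `A ^ m` count
walks of length `m`. As `2 n ≤ N`, distinct cycles are disjoint, so a walk can be shortened or
prolonged by multiples of the lengths of the cycles it meets. Suppose no cycle leads to another one.
Two walks of length `N + 1` with the same ends then run through cycles of lengths `p ≠ q` with
`p + q + 2 ≤ n`, and shortening both by `lcm p q` gives two walks that a lower power already counts.

So some cycle, of length `p`, leads to another, of length `q`. Along a shortest link, of length `d`,
one can wind around either cycle, which gives two walks of length `lcm p q + d` with the same ends.
Hence `N < lcm p q + d`, while `p + q + d ≤ n + 1`. This forces `d = 1` and `p * q = N`, or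
`n = 10`, `d = 2` and `{p, q} = {4, 5}`. The two cycles and the link then use all the vertices, and
any further arc would produce two walks counted by a power of exponent at most `N`.

Conversely, every vertex of such a graph has out-degree one except for the source of the link, so
two walks with the same ends can differ only in how often they wind around the first cycle before
they leave it, and the first repetition has length `p * q + d`.
-/

open Function

section ZeroOne

theorem isZO_reindex_iff {α β : Type*} {A : Matrix α α ℕ} (e : α ≃ β) :
    IsZO (Matrix.reindex e e A) ↔ IsZO A :=
  ⟨fun h i j => by simpa using h (e i) (e j), fun h _ _ => h _ _⟩

variable {α β : Type*} [DecidableEq α] {A : Matrix α α ℕ}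

theorem isZO_one : IsZO (1 : Matrix α α ℕ) := by
  intro i j
  rw [Matrix.one_apply]
  split_ifs <;> simp

variable [Fintype α]

theorem theta_reindex [DecidableEq β] [Fintype β] (e : α ≃ β) (A : Matrix α α ℕ) :
    theta (Matrix.reindex e e A) = theta A := by
  have hpow (k : ℕ) : Matrix.reindex e e A ^ k = Matrix.reindex e e (A ^ k) :=
    (map_pow (Matrix.reindexRingEquiv ℕ e) A k).symm
  simp only [theta, hpow, isZO_reindex_iff]

theorem theta_eq_iff (hA : IsZO A) {N : ℕ} :
    theta A = N ↔ (∀ m ≤ N, IsZO (A ^ m)) ∧ ¬ IsZO (A ^ (N + 1)) := by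
  constructor
  · intro h
    have hmem := csInf_mem (s := (fun k : ℕ => (k : ℕ∞)) '' {k | 1 ≤ k ∧ ¬ IsZO (A ^ (k + 1))})
      (Set.nonempty_iff_ne_empty.2 fun hempty => by simp [theta, hempty] at h)
    obtain ⟨k, ⟨-, hk⟩, hkN⟩ := hmem
    obtain rfl : k = N := Nat.cast_inj.1 (hkN.trans h)
    refine ⟨fun m hm => ?_, hk⟩
    match m with
    | 0 => exact pow_zero A ▸ isZO_one
    | 1 => exact (pow_one A).symm ▸ hA
    | m + 2 =>
      by_contra hZ
      have hle : theta A ≤ (m + 1 : ℕ) := sInf_le ⟨m + 1, ⟨by omega, hZ⟩, rfl⟩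
      rw [h, Nat.cast_le] at hle
      omega
  · rintro ⟨hZ, hN⟩
    have hpos : 1 ≤ N := by
      by_contra! hlt
      obtain rfl : N = 0 := by omega
      exact hN (by simpa using hA)
    refine le_antisymm (sInf_le ⟨N, ⟨hpos, hN⟩, rfl⟩) (le_sInf ?_)
    rintro _ ⟨k, ⟨-, hk⟩, rfl⟩
    exact Nat.cast_le.2 (not_lt.1 fun hlt => hk (hZ _ hlt))

end ZeroOne

section Walks

variable {α : Type*} [Fintype α] [DecidableEq α] {A : Matrix α α ℕ}

/-- There is a walk of length `m` from `i` to `j` in the digraph of `A`. -/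
def HasWalk (A : Matrix α α ℕ) (m : ℕ) (i j : α) : Prop := 0 < (A ^ m) i j

/-- Some walk, possibly of length zero, leads from `i` to `j`. -/
def Reaches (A : Matrix α α ℕ) (i j : α) : Prop := ∃ m, HasWalk A m i j

/-- `w 0, …, w n` are the successive vertices of a walk; later values of `w` are irrelevant. -/
def IsWalk (A : Matrix α α ℕ) (w : ℕ → α) (n : ℕ) : Prop :=
  ∀ t < n, HasWalk A 1 (w t) (w (t + 1))

/-- Some closed walk of positive length passes through `x`. -/
def OnCycle (A : Matrix α α ℕ) (x : α) : Prop := ∃ m, 0 < m ∧ HasWalk A m x x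

theorem hasWalk_zero {i j : α} : HasWalk A 0 i j ↔ i = j := by
  by_cases h : i = j <;> simp [HasWalk, h]

theorem hasWalk_one {i j : α} : HasWalk A 1 i j ↔ A i j ≠ 0 := by
  simp [HasWalk, Nat.pos_iff_ne_zero]

theorem hasWalk_add {m n : ℕ} {i j : α} :
    HasWalk A (m + n) i j ↔ ∃ k, HasWalk A m i k ∧ HasWalk A n k j := by
  simp [HasWalk, pow_add, Matrix.mul_apply, Finset.sum_pos_iff]

namespace HasWalk

variable {m n : ℕ} {i j k k' : α}

theorem reaches (h : HasWalk A m i j) : Reaches A i j := ⟨m, h⟩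

theorem append (h : HasWalk A m i k) (h' : HasWalk A n k j) : HasWalk A (m + n) i j :=
  hasWalk_add.2 ⟨k, h, h'⟩

theorem of_dvd (h : HasWalk A m i i) (hn : m ∣ n) : HasWalk A n i i := by
  obtain ⟨t, rfl⟩ := hn
  induction t with
  | zero => exact hasWalk_zero.2 rfl
  | succ t ih => exact ih.append h

theorem eq_of_isZO (hZ : IsZO (A ^ (m + n))) (h₁ : HasWalk A m i k) (h₂ : HasWalk A n k j)
    (h₁' : HasWalk A m i k') (h₂' : HasWalk A n k' j) : k = k' := by
  by_contra hne
  have hle : ∑ x ∈ {k, k'}, (A ^ m) i x * (A ^ n) x j ≤ 1 :=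
    (Finset.sum_le_sum_of_subset (Finset.subset_univ _)).trans
      (by simpa only [pow_add, Matrix.mul_apply] using hZ i j)
  rw [Finset.sum_pair hne] at hle
  have := Nat.mul_pos h₁ h₂
  have := Nat.mul_pos h₁' h₂'
  omega

theorem reaches_or_reaches {m' n' : ℕ} (hZ : IsZO (A ^ (m + n))) (h₁ : HasWalk A m i k)
    (h₂ : HasWalk A n k j) (h₁' : HasWalk A m' i k') (h₂' : HasWalk A n' k' j)
    (hlen : m + n = m' + n') : Reaches A k k' ∨ Reaches A k' k := by
  wlog hle : m ≤ m' generalizing m n m' n' k k'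
  · exact (this (hlen ▸ hZ) h₁' h₂' h₁ h₂ hlen.symm (by omega)).symm
  obtain ⟨r, rfl⟩ := Nat.exists_eq_add_of_le hle
  obtain ⟨x, hix, hxk'⟩ := hasWalk_add.1 h₁'
  obtain rfl : n = r + n' := by omega
  exact .inl (eq_of_isZO hZ h₁ h₂ hix (hxk'.append h₂') ▸ hxk'.reaches)

end HasWalk

theorem Reaches.refl (i : α) : Reaches A i i := ⟨0, hasWalk_zero.2 rfl⟩

theorem Reaches.trans {i j k : α} (h : Reaches A i j) (h' : Reaches A j k) : Reaches A i k :=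
  let ⟨_, hm⟩ := h
  let ⟨_, hn⟩ := h'
  (hm.append hn).reaches

theorem IsWalk.hasWalk {w : ℕ → α} {n s t : ℕ} (hw : IsWalk A w n) (hst : s ≤ t) (ht : t ≤ n) :
    HasWalk A (t - s) (w s) (w t) := by
  induction t, hst using Nat.le_induction with
  | base => simp [hasWalk_zero]
  | succ t hst ih =>
    rw [Nat.succ_sub hst]
    exact (ih (by omega)).append (hw t (by omega))

theorem IsWalk.cons {w : ℕ → α} {n : ℕ} {i : α} (hi : HasWalk A 1 i (w 0)) (hw : IsWalk A w n) :
    IsWalk A (fun t => Nat.casesOn t i w) (n + 1)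
  | 0, _ => hi
  | t + 1, ht => hw t (by omega)

theorem HasWalk.exists_isWalk {n : ℕ} {i j : α} (h : HasWalk A n i j) :
    ∃ w, w 0 = i ∧ w n = j ∧ IsWalk A w n := by
  induction n generalizing i with
  | zero => exact ⟨fun _ => i, rfl, hasWalk_zero.1 h, fun _ ht => absurd ht (Nat.not_lt_zero _)⟩
  | succ n ih =>
    obtain ⟨k, hik, hkj⟩ := hasWalk_add.1 (add_comm n 1 ▸ h)
    obtain ⟨w, rfl, hwn, hw⟩ := ih hkj
    exact ⟨_, rfl, hwn, hw.cons hik⟩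

theorem HasWalk.exists_isWalk_through {m n : ℕ} {i j k : α} (h : HasWalk A m i k)
    (h' : HasWalk A n k j) : ∃ w, w 0 = i ∧ w m = k ∧ w (m + n) = j ∧ IsWalk A w (m + n) := by
  induction m generalizing i with
  | zero =>
    obtain ⟨w, hw0, hwn, hw⟩ := h'.exists_isWalk
    exact ⟨w, hw0.trans (hasWalk_zero.1 h).symm, hw0, by rwa [zero_add], by rwa [zero_add]⟩
  | succ m ih =>
    obtain ⟨l, hil, hlk⟩ := hasWalk_add.1 (add_comm m 1 ▸ h)
    obtain ⟨w, rfl, hwm, hwn, hw⟩ := ih hlk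
    exact ⟨fun t => Nat.casesOn t i w, rfl, hwm, by rwa [Nat.add_right_comm],
      Nat.add_right_comm m n 1 ▸ hw.cons hil⟩

theorem HasWalk.exists_closed {m : ℕ} {i j : α} (h : HasWalk A m i j)
    (hm : Fintype.card α ≤ m) : ∃ z a b c, 0 < c ∧ a + c + b = m ∧
      HasWalk A a i z ∧ HasWalk A c z z ∧ HasWalk A b z j := by
  obtain ⟨w, rfl, rfl, hw⟩ := h.exists_isWalk
  obtain ⟨s, t, hne, hst⟩ := Fintype.exists_ne_map_eq_of_card_lt
    (fun t : Fin (m + 1) => w t) (by simpa using Nat.lt_succ_of_le hm)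
  wlog hlt : s < t generalizing s t
  · exact this t s hne.symm hst.symm (lt_of_le_of_ne (not_lt.1 hlt) hne.symm)
  have hlt' : (s : ℕ) < t := hlt
  have ht := t.is_le
  refine ⟨w s, s, m - t, t - s, by omega, by omega, hw.hasWalk (Nat.zero_le s) (by omega), ?_, ?_⟩
  · simpa only [← hst] using hw.hasWalk hlt'.le ht
  · simpa only [hst] using hw.hasWalk ht le_rfl

theorem Reaches.exists_short {i j : α} (h : Reaches A i j) :
    ∃ m < Fintype.card α, HasWalk A m i j := by
  classical
  refine ⟨Nat.find h, ?_, Nat.find_spec h⟩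
  by_contra! hle
  obtain ⟨z, a, b, c, hc, habc, ha, -, hb⟩ := (Nat.find_spec h).exists_closed hle
  exact Nat.find_min h (by omega) (ha.append hb)

theorem exists_hasWalk_ne {m : ℕ} (hA : IsZO A) (hm : IsZO (A ^ m))
    (hm' : ¬ IsZO (A ^ (m + 1))) : ∃ i j k k', k ≠ k' ∧ HasWalk A 1 i k ∧ HasWalk A m k j ∧
      HasWalk A 1 i k' ∧ HasWalk A m k' j := by
  contrapose! hm'
  intro i j
  have hterm (x : α) : A i x * (A ^ m) x j ≤ 1 := Nat.mul_le_mul (hA i x) (hm x j)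
  have hwalk (x : α) (hx : A i x * (A ^ m) x j ≠ 0) : HasWalk A 1 i x ∧ HasWalk A m x j :=
    ⟨hasWalk_one.2 (left_ne_zero_of_mul hx), Nat.pos_of_ne_zero (right_ne_zero_of_mul hx)⟩
  rw [pow_succ', Matrix.mul_apply]
  by_cases hzero : ∀ x, A i x * (A ^ m) x j = 0
  · simp [hzero]
  · obtain ⟨k, hk⟩ := not_forall.1 hzero
    rw [Finset.sum_eq_single k (fun x _ hx => ?_) (by simp)]
    · exact hterm k
    · by_contra hne
      exact hm' i j k x hx.symm (hwalk k hk).1 (hwalk k hk).2 (hwalk x hne).1 (hwalk x hne).2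

end Walks

section Cycles

variable {α : Type*} [Fintype α] [DecidableEq α] {A : Matrix α α ℕ}

/-- `p` is the least positive length of a closed walk through `x`. -/
def IsPeriod (A : Matrix α α ℕ) (x : α) (p : ℕ) : Prop := IsLeast {m | 0 < m ∧ HasWalk A m x x} p

/-- `c` runs around a cycle with `p` vertices; it is indexed by `ℕ`, with period `p`, so that walks
along the cycle may go around it several times. -/
structure IsCycle (A : Matrix α α ℕ) (p : ℕ) (c : ℕ → α) : Prop where
  pos : 0 < p
  step : ∀ t, HasWalk A 1 (c t) (c (t + 1))
  eq_iff : ∀ s t, c s = c t ↔ s ≡ t [MOD p]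

theorem OnCycle.exists_isPeriod {x : α} (h : OnCycle A x) : ∃ p, IsPeriod A x p := by
  classical
  exact ⟨_, Nat.isLeast_find h⟩

namespace IsPeriod

variable {x : α} {p : ℕ} (h : IsPeriod A x p)
include h

theorem pos : 0 < p := h.1.1

theorem hasWalk : HasWalk A p x x := h.1.2

theorem onCycle : OnCycle A x := ⟨p, h.1⟩

theorem exists_isCycle : ∃ c, c 0 = x ∧ IsCycle A p c := by
  obtain ⟨w, hw0, hwp, hw⟩ := h.hasWalk.exists_isWalk
  have hmod (t : ℕ) : t % p < p := Nat.mod_lt t h.pos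
  have hinj {a b : ℕ} (hab : a < b) (hb : b < p) : w a ≠ w b := by
    intro heq
    have hax := hw.hasWalk (Nat.zero_le a) (by omega)
    have hbx := hw.hasWalk hb.le le_rfl
    rw [hwp, ← heq] at hbx
    have := h.2 ⟨by omega, (hw0 ▸ hax).append hbx⟩
    omega
  refine ⟨fun t => w (t % p), by simp [hw0], h.pos, fun t => ?_, fun s t => ⟨fun hst => ?_, ?_⟩⟩
  · have hstep := hw _ (hmod t)
    rw [← Nat.mod_add_mod t p 1]
    rcases (Nat.succ_le_of_lt (hmod t)).lt_or_eq with hlt | (heq : t % p + 1 = p)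
    · rwa [Nat.mod_eq_of_lt hlt]
    · rw [heq, hwp, ← hw0] at hstep
      rwa [heq, Nat.mod_self]
  · exact le_antisymm (not_lt.1 fun hlt => hinj hlt (hmod s) hst.symm)
      (not_lt.1 fun hlt => hinj hlt (hmod t) hst)
  · exact congrArg w

end IsPeriod

namespace IsCycle

variable {c : ℕ → α} {p : ℕ} (h : IsCycle A p c)
include h

theorem hasWalk (t n : ℕ) : HasWalk A n (c t) (c (t + n)) := by
  simpa using IsWalk.hasWalk (n := t + n) (fun s _ => h.step s) (Nat.le_add_right t n) le_rfl

theorem hasWalk_of_modEq {s t n : ℕ} (hst : s + n ≡ t [MOD p]) : HasWalk A n (c s) (c t) :=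
  (h.eq_iff _ _).2 hst ▸ h.hasWalk s n

theorem reaches (s t : ℕ) : Reaches A (c s) (c t) := by
  refine (h.hasWalk_of_modEq (n := p * s - s + t) ?_).reaches
  rw [show s + (p * s - s + t) = t + p * s by have := Nat.le_mul_of_pos_left s h.pos; omega]
  exact Nat.add_mul_mod_self_left ..

theorem onCycle (t : ℕ) : OnCycle A (c t) :=
  ⟨p, h.pos, h.hasWalk_of_modEq (Nat.add_mod_right ..)⟩

theorem injective : Injective fun t : Fin p => c t := fun s t hst =>
  Fin.ext (((h.eq_iff s t).1 hst).eq_of_lt_of_lt s.2 t.2)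

end IsCycle

/-- A vertex has at most one successor in its own strong component. Thus every strong component
is a cycle or a single vertex without a loop. -/
def DisjointCycles (A : Matrix α α ℕ) : Prop :=
  ∀ ⦃x y y'⦄, HasWalk A 1 x y → Reaches A y x → HasWalk A 1 x y' → Reaches A y' x → y = y'

theorem disjointCycles_of_isZO (hZ : ∀ m ≤ 2 * Fintype.card α, IsZO (A ^ m)) :
    DisjointCycles A := by
  intro x y y' hy hyx hy' hyx'
  obtain ⟨a, ha, hwa⟩ := hyx.exists_short
  obtain ⟨b, hb, hwb⟩ := hyx'.exists_short
  have hback : HasWalk A (a + (1 + b)) y' x := by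
    convert hwb.append (hy.append hwa) using 1
    omega
  exact HasWalk.eq_of_isZO (hZ (1 + (a + (1 + b))) (by omega)) hy (hwa.append (hy'.append hwb))
    hy' hback

namespace DisjointCycles

variable (hD : DisjointCycles A)
include hD

theorem eq_of_hasWalk {m : ℕ} {x y y' : α} (hy : HasWalk A m x y) (hyx : Reaches A y x)
    (hy' : HasWalk A m x y') (hyx' : Reaches A y' x) : y = y' := by
  induction m generalizing x with
  | zero => exact (hasWalk_zero.1 hy).symm.trans (hasWalk_zero.1 hy')
  | succ m ih =>
    rw [add_comm, hasWalk_add] at hy hy'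
    obtain ⟨z, hxz, hzy⟩ := hy
    obtain ⟨z', hxz', hzy'⟩ := hy'
    obtain rfl := hD hxz (hzy.reaches.trans hyx) hxz' (hzy'.reaches.trans hyx')
    exact ih hzy (hyx.trans hxz.reaches) hzy' (hyx'.trans hxz.reaches)

theorem period_dvd {x : α} {p m : ℕ} (h : IsPeriod A x p) (hm : HasWalk A m x x) : p ∣ m := by
  rw [← Nat.div_add_mod m p, hasWalk_add] at hm
  obtain ⟨z, hxz, hzx⟩ := hm
  obtain rfl := hD.eq_of_hasWalk hxz hzx.reaches (h.hasWalk.of_dvd (Nat.dvd_mul_right ..)) (.refl x)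
  refine Nat.dvd_of_mod_eq_zero (Nat.eq_zero_of_not_pos fun hpos => ?_)
  exact absurd (h.2 ⟨hpos, hzx⟩) (not_le.2 (Nat.mod_lt m h.pos))

theorem period_dvd_of_reaches {x z : α} {p m : ℕ} (h : IsPeriod A x p) (hxz : Reaches A x z)
    (hzx : Reaches A z x) (hm : HasWalk A m z z) : p ∣ m := by
  obtain ⟨a, ha⟩ := hxz
  obtain ⟨b, hb⟩ := hzx
  have hab := hD.period_dvd h (ha.append hb)
  have hamb := hD.period_dvd h ((ha.append hm).append hb)
  rw [Nat.add_right_comm] at hamb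
  exact (Nat.dvd_add_right hab).1 hamb

theorem period_eq_of_reaches {x z : α} {p q : ℕ} (h : IsPeriod A x p) (h' : IsPeriod A z q)
    (hxz : Reaches A x z) (hzx : Reaches A z x) : p = q :=
  Nat.dvd_antisymm (hD.period_dvd_of_reaches h hxz hzx h'.hasWalk)
    (hD.period_dvd_of_reaches h' hzx hxz h.hasWalk)

theorem exists_isPeriod_of_card_le {m : ℕ} {i j : α} (h : HasWalk A m i j)
    (hm : Fintype.card α ≤ m) :
    ∃ z p a b, IsPeriod A z p ∧ HasWalk A a i z ∧ HasWalk A b z j ∧ a + b + p = m := by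
  obtain ⟨z, a, b, c, hc, habc, ha, hcz, hb⟩ := h.exists_closed hm
  obtain ⟨p, hp⟩ := OnCycle.exists_isPeriod ⟨c, hc, hcz⟩
  have hdvd := hD.period_dvd hp hcz
  have hle := Nat.le_of_dvd hc hdvd
  exact ⟨z, p, a, c - p + b, hp, ha,
    (hp.hasWalk.of_dvd (Nat.dvd_sub hdvd dvd_rfl)).append hb, by omega⟩

end DisjointCycles

theorem IsPeriod.hasWalk_of_modEq {y j : α} {p c d m : ℕ} (h : IsPeriod A y p)
    (hd : HasWalk A d y j) (hmod : c + d ≡ m [MOD p]) (hle : c + d ≤ m) :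
    HasWalk A (m - c) y j := by
  have := (h.hasWalk.of_dvd ((Nat.modEq_iff_dvd' hle).1 hmod)).append hd
  rwa [show m - (c + d) + d = m - c by omega] at this

theorem IsCycle.apply {c : ℕ → α} {p : ℕ} (h : IsCycle A p c) (hA : IsZO A)
    (hD : DisjointCycles A) (a b : Fin p) : A (c a) (c b) = Cmat p a b := by
  have hsucc : A (c a) (c b) ≠ 0 ↔ (b : ℕ) = (a + 1) % p := by
    rw [← hasWalk_one]
    constructor
    · intro hab
      have := (h.eq_iff _ _).1 (hD hab (h.reaches b a) (h.step a) (h.reaches _ a))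
      rwa [Nat.ModEq, Nat.mod_eq_of_lt b.2] at this
    · intro hab
      exact h.hasWalk_of_modEq (by rw [hab]; exact (Nat.mod_modEq _ _).symm)
  have := hA (c a) (c b)
  rw [Cmat, Matrix.of_apply]
  split_ifs with hab <;> omega

end Cycles

section Unlinked

variable {α : Type*} [Fintype α] [DecidableEq α] {A : Matrix α α ℕ}

/-- No walk leads from one cycle to a cycle in a different strong component. -/
def Unlinked (A : Matrix α α ℕ) : Prop :=
  ∀ ⦃x y⦄, OnCycle A x → OnCycle A y → Reaches A x y → Reaches A y x

namespace Unlinked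

variable (hU : Unlinked A) (hD : DisjointCycles A)
include hU hD

theorem not_reaches {x y : α} {p q : ℕ} (hp : IsPeriod A x p) (hq : IsPeriod A y q)
    (hne : p ≠ q) : ¬ Reaches A x y := fun h =>
  hne (hD.period_eq_of_reaches hp hq h (hU hp.onCycle hq.onCycle h))

theorem exists_injOn_isWalk_through {i j z : α} {a b p : ℕ} (hp : IsPeriod A z p)
    (ha : HasWalk A a i z) (hb : HasWalk A b z j) :
    ∃ w n s, w 0 = i ∧ w n = j ∧ IsWalk A w n ∧ Set.InjOn w (Set.Iic n) ∧ s ≤ n ∧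
      IsPeriod A (w s) p ∧ n ≡ a + b [MOD p] := by
  induction hn : a + b using Nat.strong_induction_on generalizing z a b with | _ n ih
  obtain ⟨w, rfl, rfl, rfl, hw⟩ := ha.exists_isWalk_through hb
  by_cases hinj : Set.InjOn w (Set.Iic (a + b))
  · exact ⟨w, a + b, a, rfl, rfl, hw, hinj, Nat.le_add_right a b, hp, hn ▸ rfl⟩
  simp only [Set.InjOn, Set.mem_Iic, not_forall] at hinj
  obtain ⟨s, hs, t, ht, heq, hne⟩ := hinj
  wlog hlt : s < t generalizing s t
  · exact this t ht s hs heq.symm (Ne.symm hne) (by omega)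
  have hclosed : HasWalk A (t - s) (w s) (w s) := by simpa only [heq] using hw.hasWalk hlt.le ht
  have hcycle : OnCycle A (w s) := ⟨t - s, by omega, hclosed⟩
  have hlinked : Reaches A (w s) (w a) ∧ Reaches A (w a) (w s) := by
    rcases le_total s a with h | h
    · have := (hw.hasWalk h (Nat.le_add_right a b)).reaches
      exact ⟨this, hU hcycle hp.onCycle this⟩
    · have := (hw.hasWalk h hs).reaches
      exact ⟨hU hp.onCycle hcycle this, this⟩
  obtain ⟨r, hr⟩ := hcycle.exists_isPeriod
  obtain rfl := hD.period_eq_of_reaches hp hr hlinked.2 hlinked.1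
  obtain ⟨w', n', s', h0, hn', hw', hinj', hs', hp', hmod⟩ :=
    ih (s + (a + b - t)) (by omega) hr (hw.hasWalk (Nat.zero_le s) hs)
      (heq ▸ hw.hasWalk ht le_rfl) rfl
  refine ⟨w', n', s', h0, hn', hw', hinj', hs', hp', hmod.trans ?_⟩
  rw [Nat.modEq_iff_dvd' (by omega), show n - (s + (a + b - t)) = t - s by omega]
  exact hD.period_dvd hr hclosed

theorem exists_short_walk_through {i j z z' : α} {a b p q : ℕ} (hp : IsPeriod A z p)
    (hq : IsPeriod A z' q) (hne : p ≠ q) (ha : HasWalk A a i z) (hb : HasWalk A b z j) :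
    ∃ y c d, IsPeriod A y p ∧ HasWalk A c i y ∧ HasWalk A d y j ∧ c + d ≡ a + b [MOD p] ∧
      c + d + 1 + q ≤ Fintype.card α := by
  obtain ⟨w, n, s, rfl, rfl, hw, hinj, hs, hps, hmod⟩ :=
    hU.exists_injOn_isWalk_through hD hp ha hb
  obtain ⟨k, rfl, hk⟩ := hq.exists_isCycle
  refine ⟨w s, s, n - s, hps, hw.hasWalk (Nat.zero_le s) hs, hw.hasWalk hs le_rfl, by
    rwa [Nat.add_sub_of_le hs], ?_⟩
  have hdisj (t : Fin (n + 1)) (l : Fin q) : w t ≠ k l := by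
    intro heq
    rcases le_total (t : ℕ) s with h | h
    · have := (hw.hasWalk h hs).reaches
      exact hU.not_reaches hD hq hps hne.symm ((hk.reaches 0 l).trans (heq ▸ this))
    · have := (hw.hasWalk h t.is_le).reaches
      exact hU.not_reaches hD hps hq hne ((heq ▸ this).trans (hk.reaches l 0))
  have hinj' : Injective fun t : Fin (n + 1) => w t := fun t t' h =>
    Fin.ext (hinj t.is_le t'.is_le h)
  simpa [Nat.sub_add_cancel hs, Nat.add_sub_of_le hs] using
    Fintype.card_le_of_injective _ (hinj'.sumElim hk.injective hdisj)

theorem period_add_period_le {i j z z' : α} {p q : ℕ} (hp : IsPeriod A z p)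
    (hq : IsPeriod A z' q) (hne : p ≠ q) (hiz : Reaches A i z) (hzj : Reaches A z j)
    (hiz' : Reaches A i z') (hz'j : Reaches A z' j) : p + q + 2 ≤ Fintype.card α := by
  obtain ⟨c, rfl, hc⟩ := hp.exists_isCycle
  obtain ⟨k, rfl, hk⟩ := hq.exists_isCycle
  have hck := hU.not_reaches hD hp hq hne
  have hkc := hU.not_reaches hD hq hp hne.symm
  have hij : i ≠ j := fun h => hck (hzj.trans (h ▸ hiz'))
  have hinj := hc.injective.sumElim hk.injective fun s t hst =>
    hck ((hst ▸ hc.reaches 0 s).trans (hk.reaches t 0))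
  have hpair : Injective fun b : Bool => cond b i j := Bool.injective_iff.2 hij.symm
  have hdisj : ∀ x b, Sum.elim (fun t : Fin p => c t) (fun t : Fin q => k t) x ≠ cond b i j
    | .inl t, true => fun (h : c t = i) => hck ((h ▸ hc.reaches 0 t).trans hiz')
    | .inr t, true => fun (h : k t = i) => hkc ((h ▸ hk.reaches 0 t).trans hiz)
    | .inl t, false => fun (h : c t = j) => hkc (hz'j.trans (h ▸ hc.reaches t 0))
    | .inr t, false => fun (h : k t = j) => hck (hzj.trans (h ▸ hk.reaches t 0))
  simpa using Fintype.card_le_of_injective _ (hinj.sumElim hpair hdisj)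

end Unlinked

theorem mul_add_le_of_add_two_le {p q n N : ℕ} (hp : 0 < p) (hpq : p + q + 2 ≤ n)
    (hN : (n - 1) ^ 2 ≤ 4 * N) : p * q + n ≤ N + q + 2 := by
  obtain ⟨r, rfl⟩ := Nat.exists_eq_add_of_le hpq
  rw [show p + q + 2 + r - 1 = p + q + r + 1 by omega] at hN
  zify at hp hN ⊢
  nlinarith [sq_nonneg ((p : ℤ) - q - 1), mul_nonneg (Int.natCast_nonneg r) (sub_nonneg.2 hp),
    mul_nonneg (Int.natCast_nonneg r) (Int.natCast_nonneg q), sq_nonneg (r : ℤ)]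

theorem DisjointCycles.exists_isPeriod_ne (hD : DisjointCycles A) {N : ℕ}
    (hZ : ∀ m ≤ N, IsZO (A ^ m)) (hN : ¬ IsZO (A ^ (N + 1))) (hcard : Fintype.card α ≤ N) :
    ∃ i j z z' p q a b a' b', IsPeriod A z p ∧ IsPeriod A z' q ∧ p ≠ q ∧
      HasWalk A a i z ∧ HasWalk A b z j ∧ a + b + p = N + 1 ∧
      HasWalk A a' i z' ∧ HasWalk A b' z' j ∧ a' + b' + q = N + 1 := by
  have : Nonempty α := not_isEmpty_iff.1 fun _ => hN isEmptyElim
  have hcard0 : 0 < Fintype.card α := Fintype.card_pos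
  obtain ⟨i, j, k, k', hkk', hik, hkj, hik', hkj'⟩ :=
    exists_hasWalk_ne (pow_one A ▸ hZ 1 (by omega)) (hZ N le_rfl) hN
  obtain ⟨z, p, a, b, hp, ha, hb, hab⟩ := hD.exists_isPeriod_of_card_le hkj (by omega)
  obtain ⟨z', q, a', b', hq, ha', hb', hab'⟩ := hD.exists_isPeriod_of_card_le hkj' (by omega)
  refine ⟨i, j, z, z', p, q, 1 + a, b, 1 + a', b', hp, hq, ?_, hik.append ha, hb, by omega,
    hik'.append ha', hb', by omega⟩
  rintro rfl
  have hlen : a + b = a' + b' := by omega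
  exact hkk' (HasWalk.eq_of_isZO (hZ (1 + (a + b)) (by have := hp.pos; omega)) hik
    (ha.append hb) hik' (hlen ▸ ha'.append hb'))

theorem not_unlinked_of_isZO {N : ℕ} (hZ : ∀ m ≤ N, IsZO (A ^ m)) (hN : ¬ IsZO (A ^ (N + 1)))
    (hcard : 2 * Fintype.card α ≤ N) (hcard' : (Fintype.card α - 1) ^ 2 ≤ 4 * N) :
    ¬ Unlinked A := by
  intro hU
  have hD := disjointCycles_of_isZO fun m hm => hZ m (hm.trans hcard)
  obtain ⟨i, j, z, z', p, q, a, b, a', b', hp, hq, hpq, hiz, hb, hab, hiz', hb', hab'⟩ :=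
    hD.exists_isPeriod_ne hZ hN (by omega)
  have hcount := hU.period_add_period_le hD hp hq hpq hiz.reaches hb.reaches hiz'.reaches
    hb'.reaches
  obtain ⟨y, c, d, hy, hc, hd, hmod, hle⟩ := hU.exists_short_walk_through hD hp hq hpq hiz hb
  obtain ⟨y', c', d', hy', hc', hd', hmod', hle'⟩ :=
    hU.exists_short_walk_through hD hq hp hpq.symm hiz' hb'
  have hp_le := mul_add_le_of_add_two_le hp.pos hcount hcard'
  have hq_le := mul_add_le_of_add_two_le hq.pos (add_comm p q ▸ hcount) hcard'
  have hlcm_le : p.lcm q ≤ p * q := Nat.le_of_dvd (Nat.mul_pos hp.pos hq.pos) (Nat.lcm_dvd_mul p q)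
  have hlcm_pos : 0 < p.lcm q := Nat.lcm_pos hp.pos hq.pos
  rw [mul_comm] at hq_le
  obtain ⟨m, hm⟩ : ∃ m, m + p.lcm q = N + 1 := ⟨N + 1 - p.lcm q, by omega⟩
  have hmodm {r s : ℕ} (hr : r ∣ p.lcm q) (hs : s + r = N + 1) : s ≡ m [MOD r] := by
    obtain ⟨e, he⟩ := hr
    rw [he, ← hs] at hm
    simpa [Nat.ModEq] using congrArg (· % r) hm.symm
  have hyj := hy.hasWalk_of_modEq hd
    (hmod.trans (hmodm (Nat.dvd_lcm_left p q) (by omega))) (by omega)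
  have hyj' := hy'.hasWalk_of_modEq hd'
    (hmod'.trans (hmodm (Nat.dvd_lcm_right p q) (by omega))) (by omega)
  rcases hc.reaches_or_reaches (hZ (c + (m - c)) (by omega)) hyj hc' hyj' (by omega) with h | h
  · exact hU.not_reaches hD hy hy' hpq h
  · exact hU.not_reaches hD hy' hy hpq.symm h

end Unlinked

section BlockForms

variable {α : Type*}

/-- Up to a simultaneous permutation of rows and columns, `A` is `[[C_p, X], [0, C_q]]` with a
single nonzero entry in the 0-1 matrix `X`. -/
def IsBlockForm (A : Matrix α α ℕ) (p q : ℕ) : Prop :=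
  ∃ X : Matrix (Fin p) (Fin q) ℕ, IsZO X ∧ (∃! ij : Fin p × Fin q, X ij.1 ij.2 ≠ 0) ∧
    ∃ e : (Fin p ⊕ Fin q) ≃ α,
      A = Matrix.reindex e e (Matrix.fromBlocks (Cmat p) X 0 (Cmat q))

/-- Up to a simultaneous permutation of rows and columns, `A` is `Hmat p q u v` with a single
nonzero entry in each of the 0-1 vectors `u` and `v`. -/
def IsHForm (A : Matrix α α ℕ) (p q : ℕ) : Prop :=
  ∃ (u : Fin p → ℕ) (v : Fin q → ℕ), (∀ a, u a ≤ 1) ∧ (∀ b, v b ≤ 1) ∧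
    (∃! a, u a ≠ 0) ∧ (∃! b, v b ≠ 0) ∧
    ∃ e : (Fin p ⊕ Unit ⊕ Fin q) ≃ α, A = Matrix.reindex e e (Hmat p q u v)

theorem eq_reindex_of_apply_eq {β : Type*} {A : Matrix α α ℕ} {e : β ≃ α} {M : Matrix β β ℕ}
    (h : ∀ a b, A (e a) (e b) = M a b) : A = Matrix.reindex e e M := by
  ext i j
  simp [← h]

end BlockForms

section MinimalLink

variable {α : Type*} [Fintype α] [DecidableEq α] {A : Matrix α α ℕ}

/-- The walk `w 0, …, w d` leads from the cycle `c` of length `p` to the cycle `k` of length `q`,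
and no shorter walk leads from a cycle to a cycle in a different strong component. The cycles are
parametrised so that the walk starts in `c 0` and ends in `k 0`. -/
structure IsMinLink (A : Matrix α α ℕ) (p q d : ℕ) (c w k : ℕ → α) : Prop where
  source : IsCycle A p c
  target : IsCycle A q k
  isWalk : IsWalk A w d
  start_eq : w 0 = c 0
  end_eq : w d = k 0
  not_reaches : ¬ Reaches A (k 0) (c 0)
  min : ∀ x y m, OnCycle A x → OnCycle A y → HasWalk A m x y → ¬ Reaches A y x → d ≤ m

theorem exists_isMinLink (hU : ¬ Unlinked A) : ∃ p q d c w k, IsMinLink A p q d c w k := by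
  classical
  have hex : ∃ d x y, OnCycle A x ∧ OnCycle A y ∧ HasWalk A d x y ∧ ¬ Reaches A y x := by
    simp only [Unlinked, not_forall] at hU
    obtain ⟨x, y, hx, hy, ⟨d, hd⟩, hyx⟩ := hU
    exact ⟨d, x, y, hx, hy, hd, hyx⟩
  obtain ⟨x, y, hx, hy, hd, hyx⟩ := Nat.find_spec hex
  obtain ⟨p, hp⟩ := hx.exists_isPeriod
  obtain ⟨q, hq⟩ := hy.exists_isPeriod
  obtain ⟨c, rfl, hc⟩ := hp.exists_isCycle
  obtain ⟨k, rfl, hk⟩ := hq.exists_isCycle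
  obtain ⟨w, hw0, hwd, hw⟩ := hd.exists_isWalk
  exact ⟨p, q, _, c, w, k, hc, hk, hw, hw0, hwd, hyx, fun x' y' m hx' hy' hm hyx' =>
    Nat.find_min' hex ⟨x', y', hx', hy', hm, hyx'⟩⟩

namespace IsMinLink

variable {p q d : ℕ} {c w k : ℕ → α} (h : IsMinLink A p q d c w k)
include h

theorem target_not_reaches_source (s t : ℕ) : ¬ Reaches A (k s) (c t) := fun hst =>
  h.not_reaches ((h.target.reaches 0 s).trans (hst.trans (h.source.reaches t 0)))

theorem hasWalk_of_le {t : ℕ} (ht : t ≤ d) : HasWalk A t (c 0) (w t) := by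
  simpa [h.start_eq] using h.isWalk.hasWalk (Nat.zero_le t) ht

theorem hasWalk_sub_of_le {t : ℕ} (ht : t ≤ d) : HasWalk A (d - t) (w t) (k 0) :=
  h.end_eq ▸ h.isWalk.hasWalk ht le_rfl

theorem hasWalk : HasWalk A d (c 0) (k 0) := h.end_eq ▸ h.hasWalk_of_le le_rfl

theorem le_of_hasWalk {s t m : ℕ} (hm : HasWalk A m (c s) (k t)) : d ≤ m :=
  h.min _ _ _ (h.source.onCycle s) (h.target.onCycle t) hm (h.target_not_reaches_source t s)

theorem pos : 0 < d := by
  by_contra! hd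
  obtain rfl : d = 0 := by omega
  exact h.not_reaches (hasWalk_zero.1 h.hasWalk ▸ .refl _)

theorem not_onCycle {t : ℕ} (ht : 0 < t) (htd : t < d) : ¬ OnCycle A (w t) := by
  intro hcycle
  by_cases hback : Reaches A (w t) (c 0)
  · have := h.min _ _ _ hcycle (h.target.onCycle 0) (h.hasWalk_sub_of_le htd.le)
      fun hk => h.not_reaches (hk.trans hback)
    omega
  · have := h.min _ _ _ (h.source.onCycle 0) hcycle (h.hasWalk_of_le htd.le) hback
    omega

theorem not_reaches_source {s t : ℕ} (ht : 0 < t) (htd : t ≤ d) : ¬ Reaches A (w t) (c s) := by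
  intro hts
  rcases htd.lt_or_eq with hlt | rfl
  · obtain ⟨m, hm⟩ := hts.trans (h.source.reaches s 0)
    exact h.not_onCycle ht hlt ⟨m + t, by omega, hm.append (h.hasWalk_of_le htd)⟩
  · exact h.target_not_reaches_source 0 s (h.end_eq ▸ hts)

theorem target_not_reaches {s t : ℕ} (htd : t < d) : ¬ Reaches A (k s) (w t) := by
  intro hst
  rcases t.eq_zero_or_pos with rfl | ht
  · exact h.target_not_reaches_source s 0 (h.start_eq ▸ hst)
  · obtain ⟨m, hm⟩ := (h.target.reaches 0 s).trans hst
    exact h.not_onCycle ht htd ⟨d - t + m, by omega, (h.hasWalk_sub_of_le htd.le).append hm⟩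

theorem injective : Injective (Sum.elim (fun t : Fin p => c t)
    (Sum.elim (fun t : Fin (d - 1) => w (t + 1)) (fun t : Fin q => k t))) := by
  have hne {s t : ℕ} (hst : s < t) (ht : t < d - 1) : w (s + 1) ≠ w (t + 1) := by
    intro heq
    have hclosed := h.isWalk.hasWalk (Nat.succ_le_succ hst.le) (by omega)
    rw [← heq] at hclosed
    exact h.not_onCycle (Nat.succ_pos s) (by omega) ⟨_, by omega, hclosed⟩
  refine h.source.injective.sumElim (Injective.sumElim ?_ h.target.injective ?_) ?_
  · exact fun s t hst => Fin.ext (le_antisymm (not_lt.1 fun hlt => hne hlt s.2 hst.symm)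
      (not_lt.1 fun hlt => hne hlt t.2 hst))
  · exact fun s t hst => h.target_not_reaches (s := t) (t := s + 1) (by omega) (hst ▸ .refl _)
  · rintro s (t | t) hst
    · exact h.not_reaches_source (s := s) (t := t + 1) (by omega) (by omega) (hst ▸ .refl _)
    · exact h.target_not_reaches_source t s (hst ▸ .refl _)

theorem card_le : p + q + d ≤ Fintype.card α + 1 := by
  have hcard := Fintype.card_le_of_injective _ h.injective
  have := h.pos
  simp only [Fintype.card_sum, Fintype.card_fin] at hcard
  omega

theorem not_hasWalk {m : ℕ} {j : α} (hZ : IsZO (A ^ (d + m))) (hm : HasWalk A m (k 0) j) :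
    ¬ HasWalk A (d + m - 1) (c 1) j := by
  intro hj
  have hd := h.pos
  have hlen : d + m = 1 + (d - 1 + m) := by omega
  have heq : w 1 = c 1 := HasWalk.eq_of_isZO (hlen ▸ hZ) (h.hasWalk_of_le hd)
    ((h.hasWalk_sub_of_le hd).append hm) (h.source.step 0) (by rwa [← Nat.sub_add_comm hd])
  exact h.not_reaches_source (s := 1) one_pos hd (heq ▸ .refl _)

theorem not_isZO : ¬ IsZO (A ^ (p.lcm q + d)) := by
  intro hZ
  have hlcm : 0 < p.lcm q := Nat.lcm_pos h.source.pos h.target.pos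
  have hk : HasWalk A (p.lcm q) (k 0) (k 0) :=
    h.target.hasWalk_of_modEq (by simpa using Nat.modEq_zero_iff_dvd.2 (Nat.dvd_lcm_right p q))
  have hc : HasWalk A (p.lcm q - 1) (c 1) (c 0) := h.source.hasWalk_of_modEq (by
    rw [Nat.add_sub_cancel' hlcm]
    exact Nat.modEq_zero_iff_dvd.2 (Nat.dvd_lcm_left p q))
  refine h.not_hasWalk (add_comm _ d ▸ hZ) hk ?_
  rw [show d + p.lcm q - 1 = p.lcm q - 1 + d by omega]
  exact hc.append h.hasWalk

theorem eq_zero_of_hasWalk (hpq : p.Coprime q) (hZ : IsZO (A ^ (p * q + d - 1))) {a b : ℕ}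
    (ha : a < p) (hb : b < q) (hab : HasWalk A d (c a) (k b)) : a = 0 ∧ b = 0 := by
  obtain ⟨s, hs, hsa, hsb⟩ : ∃ s < p * q, s ≡ a [MOD p] ∧ s ≡ b [MOD q] :=
    ⟨_, Nat.chineseRemainder_lt_mul hpq a b h.source.pos.ne' h.target.pos.ne',
      (Nat.chineseRemainder hpq a b).2⟩
  rcases s.eq_zero_or_pos with rfl | hs0
  · exact ⟨(hsa.eq_of_lt_of_lt h.source.pos ha).symm, (hsb.eq_of_lt_of_lt h.target.pos hb).symm⟩
  exfalso
  have hlen : p * q + d - 1 = d + (p * q - 1) := by omega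
  have hc : HasWalk A (s - 1) (c 1) (c a) :=
    h.source.hasWalk_of_modEq (by rwa [Nat.add_sub_cancel' hs0])
  have hk : HasWalk A (p * q - 1 - s) (k b) (k (p * q - 1)) := h.target.hasWalk_of_modEq (by
    simpa [Nat.add_sub_of_le (Nat.le_sub_one_of_lt hs)] using hsb.symm.add_right (p * q - 1 - s))
  refine h.not_hasWalk (hlen ▸ hZ) (by simpa using h.target.hasWalk 0 (p * q - 1)) ?_
  convert (hc.append hab).append hk using 1
  omega

end IsMinLink

theorem IsMinLink.isBlockForm {p q : ℕ} {c w k : ℕ → α} (h : IsMinLink A p q 1 c w k)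
    (hA : IsZO A) (hD : DisjointCycles A) (hpq : p.Coprime q) (hcard : p + q = Fintype.card α)
    (hZ : IsZO (A ^ (p * q))) :
    IsBlockForm A p q := by
  have hinj := h.injective.comp (Sum.map_injective.2 ⟨injective_id, Sum.inr_injective⟩)
  refine ⟨Matrix.of fun a b => A (c a) (k b), fun a b => hA _ _,
    ⟨(⟨0, h.source.pos⟩, ⟨0, h.target.pos⟩), hasWalk_one.1 h.hasWalk, fun ⟨a, b⟩ hab => ?_⟩,
    Equiv.ofBijective _ ((Fintype.bijective_iff_injective_and_card _).2
      ⟨hinj, by simp [hcard]⟩), eq_reindex_of_apply_eq ?_⟩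
  · have := h.eq_zero_of_hasWalk hpq hZ a.2 b.2 (hasWalk_one.2 hab)
    simpa [Fin.ext_iff] using this
  · rintro (a | a) (b | b)
    · exact h.source.apply hA hD a b
    · rfl
    · exact of_not_not fun hne => h.target_not_reaches_source a b (hasWalk_one.2 hne).reaches
    · exact h.target.apply hA hD a b

theorem IsMinLink.isHForm {p q : ℕ} {c w k : ℕ → α} (h : IsMinLink A p q 2 c w k)
    (hA : IsZO A) (hD : DisjointCycles A) (hpq : p.Coprime q)
    (hcard : p + q + 1 = Fintype.card α) (hZ : IsZO (A ^ (p * q + 1))) :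
    IsHForm A p q := by
  have hinj := h.injective.comp (Sum.map_injective.2 ⟨injective_id, Sum.map_injective.2
    ⟨injective_of_subsingleton fun _ : Unit => (0 : Fin 1), injective_id⟩⟩)
  have hcw : HasWalk A 1 (c 0) (w 1) := h.hasWalk_of_le one_le_two
  have hwk : HasWalk A 1 (w 1) (k 0) := h.hasWalk_sub_of_le one_le_two
  have hzero {i j : α} (hij : ¬ Reaches A i j) : A i j = 0 :=
    of_not_not fun hne => hij (hasWalk_one.2 hne).reaches
  refine ⟨fun a => A (c a) (w 1), fun b => A (w 1) (k b), fun a => hA _ _, fun b => hA _ _,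
    ⟨⟨0, h.source.pos⟩, hasWalk_one.1 hcw, fun a ha => Fin.ext ?_⟩,
    ⟨⟨0, h.target.pos⟩, hasWalk_one.1 hwk, fun b hb => Fin.ext ?_⟩,
    Equiv.ofBijective _ ((Fintype.bijective_iff_injective_and_card _).2
      ⟨hinj, by simp [← hcard, ← add_assoc, add_right_comm]⟩), eq_reindex_of_apply_eq ?_⟩
  · exact (h.eq_zero_of_hasWalk hpq hZ a.2 h.target.pos ((hasWalk_one.2 ha).append hwk)).1
  · exact (h.eq_zero_of_hasWalk hpq hZ h.source.pos b.2 (hcw.append (hasWalk_one.2 hb))).2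
  · rintro (a | a | a) (b | b | b)
    · exact h.source.apply hA hD a b
    · rfl
    · refine of_not_not fun hne => ?_
      have := h.le_of_hasWalk (hasWalk_one.2 hne)
      omega
    · exact hzero (h.not_reaches_source one_pos one_le_two)
    · exact of_not_not fun hne =>
        h.not_onCycle one_pos one_lt_two ⟨1, one_pos, hasWalk_one.2 hne⟩
    · rfl
    · exact hzero (h.target_not_reaches_source a b)
    · exact hzero (h.target_not_reaches one_lt_two)
    · exact h.target.apply hA hD a b

end MinimalLink

section ExtremalValue

variable {n p q d : ℕ}

theorem four_mul_g_add_one (hn : n % 2 = 1) : 4 * g n + 1 = n ^ 2 := by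
  obtain ⟨m, rfl⟩ : ∃ m, n = 2 * m + 1 := ⟨n / 2, by omega⟩
  have hsq : (2 * m + 1) ^ 2 = 4 * (m ^ 2 + m) + 1 := by ring
  rw [g, if_pos hn, hsq]
  omega

theorem four_mul_g_add_four (hn : n % 4 = 0) (hpos : 0 < n) : 4 * g n + 4 = n ^ 2 := by
  obtain ⟨m, rfl⟩ : ∃ m, n = 4 * (m + 1) := ⟨n / 4 - 1, by omega⟩
  have hsq : (4 * (m + 1)) ^ 2 = 4 * (4 * (m ^ 2 + 2 * m) + 3) + 4 := by ring
  rw [g, if_neg (by omega), if_pos hn, hsq]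
  omega

theorem four_mul_g_add_sixteen (hn : n % 4 = 2) (hlt : 2 < n) : 4 * g n + 16 = n ^ 2 := by
  obtain ⟨m, rfl⟩ : ∃ m, n = 4 * m + 6 := ⟨n / 4 - 1, by omega⟩
  have hsq : (4 * m + 6) ^ 2 = 4 * (4 * m ^ 2 + 12 * m + 5) + 16 := by ring
  rw [g, if_neg (by omega), if_neg (by omega), hsq]
  omega

theorem sq_le_four_mul_g_add_sixteen (hn : 2 < n) : n ^ 2 ≤ 4 * g n + 16 := by
  obtain h | h | h : n % 2 = 1 ∨ n % 4 = 0 ∨ n % 4 = 2 := by omega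
  · have := four_mul_g_add_one h
    omega
  · have := four_mul_g_add_four h (by omega)
    omega
  · exact (four_mul_g_add_sixteen h hn).ge

theorem two_mul_le_g (hn : 9 ≤ n) : 2 * n ≤ g n := by
  rcases hn.eq_or_lt with rfl | hlt
  · decide
  · nlinarith [sq_le_four_mul_g_add_sixteen (n := n) (by omega)]

theorem sub_one_sq_le_four_mul_g (hn : 9 ≤ n) : (n - 1) ^ 2 ≤ 4 * g n := by
  rcases hn.eq_or_lt with rfl | hlt
  · decide
  · obtain ⟨m, rfl⟩ : ∃ m, n = m + 1 := ⟨n - 1, by omega⟩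
    rw [Nat.add_sub_cancel]
    nlinarith [sq_le_four_mul_g_add_sixteen (n := m + 1) (by omega)]

theorem starCond_iff : StarCond n p q ↔ p + q = n ∧
    ((n % 2 = 1 ∧ (p = q + 1 ∨ q = p + 1)) ∨ (n % 4 = 0 ∧ (p = q + 2 ∨ q = p + 2)) ∨
      (n % 4 = 2 ∧ (p = q + 4 ∨ q = p + 4))) := by
  have hpair (a b : ℕ) : ({p, q} : Finset ℕ) = {a, b} ↔ p = a ∧ q = b ∨ p = b ∧ q = a := by
    rw [← Finset.coe_inj, Finset.coe_pair, Finset.coe_pair, Set.pair_eq_pair_iff]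
  rw [StarCond, hpair, hpair, hpair]
  refine and_congr_right fun hsum => ?_
  refine or_congr (and_congr_right fun hn => ?_)
    (or_congr (and_congr_right fun hn => ?_) (and_congr_right fun hn => ?_)) <;> omega

theorem starCond_comm : StarCond n p q ↔ StarCond n q p := by
  rw [StarCond, StarCond, add_comm, Finset.pair_comm]

theorem starCond_ten : StarCond 10 p q ↔ p = 3 ∧ q = 7 ∨ p = 7 ∧ q = 3 := by
  rw [starCond_iff]
  omega

theorem StarCond.mul_eq_g (h : StarCond n p q) : p * q = g n := by
  wlog hpq : p ≤ q generalizing p q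
  · exact mul_comm p q ▸ this (starCond_comm.1 h) (by omega)
  obtain ⟨rfl, ⟨hn, h⟩ | ⟨hn, h⟩ | ⟨hn, h⟩⟩ := starCond_iff.1 h
  · obtain rfl : q = p + 1 := by omega
    linarith [four_mul_g_add_one hn]
  · obtain rfl : q = p + 2 := by omega
    linarith [four_mul_g_add_four hn (by omega)]
  · obtain rfl : q = p + 4 := by omega
    linarith [four_mul_g_add_sixteen hn (by omega)]

theorem StarCond.coprime (h : StarCond n p q) : p.Coprime q := by
  wlog hpq : p ≤ q generalizing p q
  · exact (this (starCond_comm.1 h) (by omega)).symm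
  obtain ⟨rfl, ⟨hn, h⟩ | ⟨hn, h⟩ | ⟨hn, h⟩⟩ := starCond_iff.1 h
  · obtain rfl : q = p + 1 := by omega
    simp
  · obtain rfl : q = p + 2 := by omega
    have : Odd p := by grind
    simpa using this
  · obtain rfl : q = p + 4 := by omega
    have : Odd p := by grind
    simpa using (Nat.coprime_two_right.2 this).pow_right 2

theorem coprime_of_g_lt (hn : 9 ≤ n) (hp : 0 < p) (hsum : p + q + d ≤ n + 1)
    (hlt : g n < p.lcm q + d) : p.Coprime q := by
  by_contra hpq
  have hgcd : 2 ≤ p.gcd q := (Nat.two_le_iff _).2 ⟨(Nat.gcd_pos_of_pos_left q hp).ne', hpq⟩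
  have hlcm : 2 * p.lcm q ≤ p * q := by
    rw [← Nat.gcd_mul_lcm p q]
    gcongr
  have hamgm : 4 * (p * q) ≤ (p + q) ^ 2 := by
    rw [← mul_assoc]
    exact four_mul_le_sq_add p q
  have := sq_le_four_mul_g_add_sixteen (n := n) (by omega)
  nlinarith

theorem le_add_add_one_of_g_lt (hn : 9 ≤ n) (hsum : p + q + d ≤ n + 1)
    (hlt : g n < p * q + d) : n ≤ p + q + 1 := by
  by_contra! hsmall
  obtain ⟨t, rfl⟩ := Nat.exists_eq_add_of_le (Nat.succ_le_of_lt hsmall)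
  have hamgm : 4 * (p * q) ≤ (p + q) ^ 2 := by
    rw [← mul_assoc]
    exact four_mul_le_sq_add p q
  have := sq_le_four_mul_g_add_sixteen (n := p + q + 1 + 1 + t) (by omega)
  nlinarith

theorem exceptional_of_g_lt (hn : 9 ≤ n) (hsum : p + q + 1 = n) (hlt : g n < p * q + 2) :
    n = 10 ∧ (p = 4 ∧ q = 5 ∨ p = 5 ∧ q = 4) := by
  wlog hpq : p ≤ q generalizing p q
  · have := this (p := q) (q := p) (by omega) (by rwa [mul_comm]) (by omega)
    omega
  obtain ⟨k, rfl⟩ := Nat.exists_eq_add_of_le hpq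
  obtain h | h | h : n % 2 = 1 ∨ n % 4 = 0 ∨ n % 4 = 2 := by omega
  · nlinarith [four_mul_g_add_one h]
  · nlinarith [four_mul_g_add_four h (by omega)]
  · have hg := four_mul_g_add_sixteen h (by omega)
    have hsq : n ^ 2 + 1 = 4 * (p * (p + k)) + k ^ 2 + 2 * n := by
      rw [← hsum]
      ring
    have hk : k ^ 2 + 2 * n < 25 := by omega
    have : 0 < k ^ 2 := pow_pos (by omega) 2
    obtain rfl : n = 10 := by omega
    have : k < 3 := by nlinarith
    omega

theorem starCond_of_g_lt (hn : 9 ≤ n) (hsum : p + q = n) (hpq : p.Coprime q)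
    (hlt : g n < p * q + 1) : StarCond n p q := by
  wlog hle : p ≤ q generalizing p q
  · exact starCond_comm.1 (this (by omega) hpq.symm (by rwa [mul_comm]) (by omega))
  obtain ⟨k, rfl⟩ := Nat.exists_eq_add_of_le hle
  have hsq : n ^ 2 = 4 * (p * (p + k)) + k ^ 2 := by
    rw [← hsum]
    ring
  rw [starCond_iff]
  obtain h | h | h : n % 2 = 1 ∨ n % 4 = 0 ∨ n % 4 = 2 := by omega
  · have hg := four_mul_g_add_one h
    have : k < 3 := by nlinarith
    omega
  · have hg := four_mul_g_add_four h (by omega)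
    have : k < 3 := by nlinarith
    have : k ≠ 0 := by
      rintro rfl
      obtain rfl : p = 1 := by simpa using hpq
      omega
    omega
  · have hg := four_mul_g_add_sixteen h (by omega)
    have : k < 5 := by nlinarith
    have : k ≠ 0 := by
      rintro rfl
      obtain rfl : p = 1 := by simpa using hpq
      omega
    have : k ≠ 2 := by
      rintro rfl
      have : Odd p := by simpa using hpq
      grind
    omega

theorem starCond_or_exceptional_of_g_lt (hn : 9 ≤ n) (hd : 0 < d) (hsum : p + q + d ≤ n + 1)
    (hpq : p.Coprime q) (hlt : g n < p * q + d) :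
    d = 1 ∧ StarCond n p q ∨ n = 10 ∧ d = 2 ∧ (p = 4 ∧ q = 5 ∨ p = 5 ∧ q = 4) := by
  have := le_add_add_one_of_g_lt hn hsum hlt
  obtain hsum' | hsum' : p + q = n ∨ p + q + 1 = n := by omega
  · obtain rfl : d = 1 := by omega
    exact .inl ⟨rfl, starCond_of_g_lt hn hsum' hpq hlt⟩
  · obtain ⟨rfl, h⟩ := exceptional_of_g_lt hn hsum' (by omega)
    have hmul : p * q = 20 := by rcases h with ⟨rfl, rfl⟩ | ⟨rfl, rfl⟩ <;> rfl
    have hg : g 10 = 21 := rfl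
    exact .inr ⟨rfl, by omega, h⟩

end ExtremalValue

section FunctionalGraph

variable {α : Type*} {f : α → α} {u v : α}

theorem iterate_apply_ne_of_mem_periodicPts (hu : u ∈ periodicPts f) (hv : ∀ n, f^[n] v ≠ u)
    (m n : ℕ) : f^[m] v ≠ f^[n] u := by
  intro h
  obtain ⟨p, hp, hpu⟩ := hu
  refine hv (p * n - n + m) ?_
  rw [iterate_add_apply, h, ← iterate_add_apply, Nat.sub_add_cancel (Nat.le_mul_of_pos_left n hp)]
  exact hpu.mul_const n

variable [DecidableEq α]

/-- The adjacency matrix of the digraph with the arcs `x → f x` and one additional arc `u → v`. -/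
def arcMatrix (f : α → α) (u v : α) : Matrix α α ℕ :=
  Matrix.of fun i j => if j = f i ∨ (i = u ∧ j = v) then 1 else 0

theorem isZO_arcMatrix : IsZO (arcMatrix f u v) := by
  intro i j
  rw [arcMatrix, Matrix.of_apply]
  split_ifs <;> simp

variable [Fintype α]

theorem hasWalk_one_arcMatrix {i j : α} :
    HasWalk (arcMatrix f u v) 1 i j ↔ j = f i ∨ (i = u ∧ j = v) := by
  rw [hasWalk_one, arcMatrix, Matrix.of_apply]
  split_ifs with h <;> simp [h]

theorem hasWalk_iterate (m : ℕ) (i : α) : HasWalk (arcMatrix f u v) m i (f^[m] i) := by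
  induction m with
  | zero => exact hasWalk_zero.2 rfl
  | succ m ih =>
    rw [iterate_succ_apply']
    exact ih.append (hasWalk_one_arcMatrix.2 (.inl rfl))

theorem HasWalk.eq_iterate_or (hv : ∀ n, f^[n] v ≠ u) {m : ℕ} {i j : α}
    (h : HasWalk (arcMatrix f u v) m i j) :
    j = f^[m] i ∨ ∃ s n, s + 1 + n = m ∧ f^[s] i = u ∧ j = f^[n] v := by
  induction m generalizing j with
  | zero => exact .inl (hasWalk_zero.1 h).symm
  | succ m ih =>
    obtain ⟨k, hik, hkj⟩ := hasWalk_add.1 h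
    rw [hasWalk_one_arcMatrix] at hkj
    rcases ih hik with rfl | ⟨s, n, hsn, hs, rfl⟩
    · rcases hkj with rfl | ⟨hu, rfl⟩
      · exact .inl (iterate_succ_apply' ..).symm
      · exact .inr ⟨m, 0, rfl, hu, rfl⟩
    · rcases hkj with rfl | ⟨hu, -⟩
      · exact .inr ⟨s, n + 1, by omega, hs, (iterate_succ_apply' ..).symm⟩
      · exact absurd hu (hv n)

theorem exists_isPeriodicPt_of_not_isZO (hu : u ∈ periodicPts f) (hv : ∀ n, f^[n] v ≠ u) {m : ℕ}
    (hm : IsZO (arcMatrix f u v ^ m)) (hm' : ¬ IsZO (arcMatrix f u v ^ (m + 1))) :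
    ∃ s n, 0 < s ∧ s + n = m ∧ IsPeriodicPt f s u ∧ IsPeriodicPt f s (f^[n] v) := by
  obtain ⟨i, j, k, k', hne, hik, hkj, hik', hkj'⟩ := exists_hasWalk_ne isZO_arcMatrix hm hm'
  wlog hk : k = f i generalizing k k'
  · rw [hasWalk_one_arcMatrix] at hik hik'
    exact this k' k hne.symm (hasWalk_one_arcMatrix.2 hik') hkj' (hasWalk_one_arcMatrix.2 hik) hkj
      (hik'.resolve_right fun h => hne ((hik.resolve_left hk).2.trans h.2.symm))
  subst hk
  obtain ⟨rfl, rfl⟩ := (hasWalk_one_arcMatrix.1 hik').resolve_left hne.symm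
  obtain rfl : j = f^[m] k' :=
    (hkj'.eq_iterate_or hv).resolve_right fun ⟨s, _, _, hs, _⟩ => hv s hs
  rcases hkj.eq_iterate_or hv with h | ⟨s, n, rfl, hs, hn⟩
  · exact absurd h (iterate_apply_ne_of_mem_periodicPts hu hv m (m + 1))
  · exact ⟨s + 1, n, s.succ_pos, rfl, hs, by rwa [IsPeriodicPt, IsFixedPt, ← iterate_add_apply]⟩

theorem not_isZO_arcMatrix_pow (hv : ∀ n, f^[n] v ≠ u) {s n : ℕ} (hs : 0 < s)
    (hu : IsPeriodicPt f s u) (hn : IsPeriodicPt f s (f^[n] v)) :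
    ¬ IsZO (arcMatrix f u v ^ (s + n + 1)) := by
  obtain ⟨s, rfl⟩ := Nat.exists_eq_add_one_of_ne_zero hs.ne'
  intro hZ
  have huv : HasWalk (arcMatrix f u v) 1 u v := hasWalk_one_arcMatrix.2 (.inr ⟨rfl, rfl⟩)
  have hcycle : f^[s] (f u) = u := hu
  have hleft : HasWalk (arcMatrix f u v) (s + 1 + n) (f u) (f^[n] v) :=
    ((hcycle ▸ hasWalk_iterate s (f u)).append huv).append (hasWalk_iterate n v)
  have hright : HasWalk (arcMatrix f u v) (s + 1 + n) v (f^[n] v) := by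
    have hreturn : f^[s + 1 + n] v = f^[n] v := (iterate_add_apply f (s + 1) n v).trans hn.eq
    exact hreturn ▸ hasWalk_iterate (s + 1 + n) v
  have heq : f u = v :=
    HasWalk.eq_of_isZO (add_comm _ 1 ▸ hZ) (hasWalk_iterate 1 u) hleft huv hright
  exact hv s (heq ▸ hcycle)

theorem theta_arcMatrix (hu : u ∈ periodicPts f) (hv : ∀ n, f^[n] v ≠ u) {ℓ : ℕ}
    (hℓ : IsLeast {n | f^[n] v ∈ periodicPts f} ℓ) :
    theta (arcMatrix f u v) =
      ((minimalPeriod f u).lcm (minimalPeriod f (f^[ℓ] v)) + ℓ : ℕ) := by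
  refine (theta_eq_iff isZO_arcMatrix).2 ⟨fun m hm => ?_, ?_⟩
  · induction m with
    | zero => exact pow_zero (arcMatrix f u v) ▸ isZO_one
    | succ m ih =>
      by_contra hZ
      obtain ⟨s, n, hs, rfl, hsu, hsv⟩ := exists_isPeriodicPt_of_not_isZO hu hv (ih (by omega)) hZ
      have hℓn : ℓ ≤ n := hℓ.2 ⟨s, hs, hsv⟩
      have hper : minimalPeriod f (f^[n] v) = minimalPeriod f (f^[ℓ] v) := by
        rw [← Nat.sub_add_cancel hℓn, iterate_add_apply, minimalPeriod_apply_iterate hℓ.1]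
      have := Nat.le_of_dvd hs (Nat.lcm_dvd hsu.minimalPeriod_dvd (hper ▸ hsv.minimalPeriod_dvd))
      omega
  · exact not_isZO_arcMatrix_pow hv
      (Nat.lcm_pos (minimalPeriod_pos_of_mem_periodicPts hu)
        (minimalPeriod_pos_of_mem_periodicPts hℓ.1))
      (isPeriodicPt_iff_minimalPeriod_dvd.2 (Nat.dvd_lcm_left _ _))
      (isPeriodicPt_iff_minimalPeriod_dvd.2 (Nat.dvd_lcm_right _ _))

end FunctionalGraph

section CycleLengths

theorem minimalPeriod_eq_of_semiconj {α β : Type*} {f : α → α} {f' : β → β} {φ : α → β}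
    (hφ : Injective φ) (h : Semiconj φ f f') (x : α) :
    minimalPeriod f' (φ x) = minimalPeriod f x :=
  minimalPeriod_eq_minimalPeriod_iff.2 fun n => by
    rw [IsPeriodicPt, IsFixedPt, ← h.iterate_right n x, hφ.eq_iff, IsPeriodicPt, IsFixedPt]

theorem coe_iterate_finRotate {n : ℕ} (t : ℕ) (i : Fin n) :
    (((finRotate n)^[t] i : Fin n) : ℕ) = (i + t) % n := by
  have := i.neZero
  induction t with
  | zero => simp [Nat.mod_eq_of_lt i.2]
  | succ t ih => simp [iterate_succ_apply', Fin.val_add, ih, add_assoc]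

theorem minimalPeriod_finRotate {n : ℕ} (i : Fin n) : minimalPeriod (finRotate n) i = n := by
  refine Nat.dvd_right_iff_eq.1 fun t => ?_
  rw [← isPeriodicPt_iff_minimalPeriod_dvd, IsPeriodicPt, IsFixedPt, Fin.ext_iff,
    coe_iterate_finRotate]
  nth_rw 2 [← Nat.mod_eq_of_lt i.2]
  exact Nat.add_modEq_left_iff

variable {α : Type*} {f : α → α} {p q : ℕ} {φ : Fin p → α} {ψ : Fin q → α}

theorem minimalPeriod_eq_of_semiconj_finRotate (hφ : Injective φ)
    (hφ' : Semiconj φ (finRotate p) f) (a : Fin p) : minimalPeriod f (φ a) = p := by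
  rw [minimalPeriod_eq_of_semiconj hφ hφ', minimalPeriod_finRotate]

theorem theta_arcMatrix_of_semiconj_finRotate [Fintype α] [DecidableEq α] (hφ : Injective φ)
    (hφ' : Semiconj φ (finRotate p) f) (hψ : Injective ψ) (hψ' : Semiconj ψ (finRotate q) f)
    {a : Fin p} {b : Fin q} {v : α} {ℓ : ℕ} (hv : ∀ n, f^[n] v ≠ φ a) (hb : f^[ℓ] v = ψ b)
    (hℓ : ∀ n < ℓ, f^[n] v ∉ periodicPts f) :
    theta (arcMatrix f (φ a) v) = (p.lcm q + ℓ : ℕ) := by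
  have hp : minimalPeriod f (φ a) = p := minimalPeriod_eq_of_semiconj_finRotate hφ hφ' a
  have hq : minimalPeriod f (f^[ℓ] v) = q :=
    hb ▸ minimalPeriod_eq_of_semiconj_finRotate hψ hψ' b
  have hu : φ a ∈ periodicPts f := minimalPeriod_pos_iff_mem_periodicPts.1 (hp.symm ▸ a.pos)
  have hmem : f^[ℓ] v ∈ periodicPts f := minimalPeriod_pos_iff_mem_periodicPts.1 (hq.symm ▸ b.pos)
  rw [theta_arcMatrix hu hv ⟨hmem, fun n hn => not_lt.1 fun hlt => hℓ n hlt hn⟩, hp, hq]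

theorem Cmat_apply {n : ℕ} (i j : Fin n) : Cmat n i j = if j = finRotate n i then 1 else 0 := by
  simp only [Cmat, Matrix.of_apply, Fin.ext_iff, ← coe_iterate_finRotate 1 i, iterate_one]

theorem exists_eq_single_of_existsUnique {ι : Type*} [DecidableEq ι] {w : ι → ℕ}
    (hle : ∀ i, w i ≤ 1) (hw : ∃! i, w i ≠ 0) : ∃ i, w = Pi.single i 1 := by
  obtain ⟨i, hi, huniq⟩ := hw
  refine ⟨i, funext fun j => ?_⟩
  rw [Pi.single_apply]
  split_ifs with hj
  · subst hj
    exact le_antisymm (hle j) (Nat.one_le_iff_ne_zero.2 hi)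
  · exact of_not_not fun hne => hj (huniq j hne)

theorem theta_fromBlocks {X : Matrix (Fin p) (Fin q) ℕ} (hX : IsZO X)
    (hX' : ∃! ij : Fin p × Fin q, X ij.1 ij.2 ≠ 0) :
    theta (Matrix.fromBlocks (Cmat p) X 0 (Cmat q)) = (p.lcm q : ℕ) := by
  obtain ⟨⟨a, b⟩, hab⟩ :=
    exists_eq_single_of_existsUnique (fun ij : Fin p × Fin q => hX ij.1 ij.2) hX'
  have hX_apply (i : Fin p) (j : Fin q) : X i j = if i = a ∧ j = b then 1 else 0 := by
    simpa [Pi.single_apply] using congrFun hab (i, j)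
  let f : Fin p ⊕ Fin q → Fin p ⊕ Fin q := Sum.map (finRotate p) (finRotate q)
  have hM : Matrix.fromBlocks (Cmat p) X 0 (Cmat q) = arcMatrix f (.inl a) (.inr b) := by
    ext (i | i) (j | j) <;> simp [arcMatrix, f, Cmat_apply, hX_apply]
  have hr : Semiconj Sum.inr (finRotate q) f := fun _ => rfl
  exact hM ▸ theta_arcMatrix_of_semiconj_finRotate (ℓ := 0) Sum.inl_injective (fun _ => rfl)
    Sum.inr_injective hr (fun n => by simp [← hr.iterate_right n b]) rfl (by simp)

theorem theta_Hmat {u : Fin p → ℕ} {v : Fin q → ℕ} (hu : ∀ a, u a ≤ 1) (hv : ∀ b, v b ≤ 1)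
    (hu' : ∃! a, u a ≠ 0) (hv' : ∃! b, v b ≠ 0) :
    theta (Hmat p q u v) = (p.lcm q + 1 : ℕ) := by
  obtain ⟨a, rfl⟩ := exists_eq_single_of_existsUnique hu hu'
  obtain ⟨b, rfl⟩ := exists_eq_single_of_existsUnique hv hv'
  let f : Fin p ⊕ Unit ⊕ Fin q → Fin p ⊕ Unit ⊕ Fin q :=
    Sum.elim (.inl ∘ finRotate p) (Sum.elim (fun _ => .inr (.inr b)) (.inr ∘ .inr ∘ finRotate q))
  have hM : Hmat p q (Pi.single a 1) (Pi.single b 1) = arcMatrix f (.inl a) (.inr (.inl ())) := by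
    ext (i | i | i) (j | j | j) <;> simp [arcMatrix, f, Hmat, Cmat_apply, Pi.single_apply]
  have hr : Semiconj (Sum.inr ∘ Sum.inr) (finRotate q) f := fun _ => rfl
  have hiter (n : ℕ) : f^[n + 1] (.inr (.inl ())) = .inr (.inr ((finRotate q)^[n] b)) :=
    (hr.iterate_right n b).symm
  have hnot_periodic : .inr (.inl ()) ∉ periodicPts f := by
    rintro ⟨_ | n, hn, hper⟩
    · exact lt_irrefl 0 hn
    · simpa using (hiter n).symm.trans hper
  rw [hM]
  refine theta_arcMatrix_of_semiconj_finRotate (ℓ := 1) Sum.inl_injective (fun _ => rfl)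
    (Sum.inr_injective.comp Sum.inr_injective) hr ?_ (hiter 0) (by simpa)
  rintro (_ | n)
  · simp
  · simp [hiter]

variable [Fintype α] [DecidableEq α] {A : Matrix α α ℕ}

theorem IsBlockForm.theta_eq (h : IsBlockForm A p q) :
    theta A = (p.lcm q : ℕ) := by
  obtain ⟨X, hX, hX', e, rfl⟩ := h
  rw [theta_reindex, theta_fromBlocks hX hX']

theorem IsHForm.theta_eq (h : IsHForm A p q) :
    theta A = (p.lcm q + 1 : ℕ) := by
  obtain ⟨u, v, hu, hv, hu', hv', e, rfl⟩ := h
  rw [theta_reindex, theta_Hmat hu hv hu' hv']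

end CycleLengths

section Main

variable {α : Type*} [Fintype α] [DecidableEq α] {A : Matrix α α ℕ}

theorem exists_isBlockForm_or_isHForm (hn : 9 ≤ Fintype.card α) (hA : IsZO A)
    (h : theta A = g (Fintype.card α)) :
    (∃ p q, StarCond (Fintype.card α) p q ∧ IsBlockForm A p q) ∨
      Fintype.card α = 10 ∧ (IsHForm A 4 5 ∨ IsHForm A 5 4) := by
  obtain ⟨hZ, hN⟩ := (theta_eq_iff hA).1 h
  have hlarge := two_mul_le_g hn
  have hD : DisjointCycles A := disjointCycles_of_isZO fun m hm => hZ m (hm.trans hlarge)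
  obtain ⟨p, q, d, c, w, k, hlink⟩ := exists_isMinLink
    (not_unlinked_of_isZO hZ hN hlarge (sub_one_sq_le_four_mul_g hn))
  have hcard := hlink.card_le
  have hlt : g (Fintype.card α) < p.lcm q + d := not_le.1 fun hle => hlink.not_isZO (hZ _ hle)
  have hpq : p.Coprime q := coprime_of_g_lt hn hlink.source.pos hcard hlt
  rw [hpq.lcm_eq_mul] at hlt
  obtain ⟨rfl, hstar⟩ | ⟨hten, rfl, hpq'⟩ :=
    starCond_or_exceptional_of_g_lt hn hlink.pos hcard hpq hlt
  · exact .inl ⟨p, q, hstar, hlink.isBlockForm hA hD hpq hstar.1 (hZ _ hstar.mul_eq_g.le)⟩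
  · refine .inr ⟨hten, ?_⟩
    have hg : g (Fintype.card α) = 21 := by rw [hten]; rfl
    obtain ⟨rfl, rfl⟩ | ⟨rfl, rfl⟩ := hpq'
    · exact .inl (hlink.isHForm hA hD hpq hten.symm (hZ _ hg.ge))
    · exact .inr (hlink.isHForm hA hD hpq hten.symm (hZ _ hg.ge))

theorem stmt_2_general (hn : 9 ≤ Fintype.card α) (hA : IsZO A) :
    theta A = g (Fintype.card α) ↔
      (∃ p q, StarCond (Fintype.card α) p q ∧ IsBlockForm A p q) ∨
        Fintype.card α = 10 ∧ (IsHForm A 4 5 ∨ IsHForm A 5 4) := by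
  refine ⟨exists_isBlockForm_or_isHForm hn hA, ?_⟩
  rintro (⟨p, q, hpq, h⟩ | ⟨hcard, h | h⟩)
  · rw [h.theta_eq, hpq.coprime.lcm_eq_mul, hpq.mul_eq_g]
  · rw [h.theta_eq, hcard]
    rfl
  · rw [h.theta_eq, hcard]
    rfl

end Main

theorem stmt_2 (A : Matrix (Fin 10) (Fin 10) ℕ) (hA : IsZO A)
    (hfin : theta A ≠ ⊤) :
    g 10 = 21 ∧
    (theta A = (21 : ℕ∞) ↔
      (∃ X : Matrix (Fin 3) (Fin 7) ℕ, IsZO X ∧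
          (∃! ij : Fin 3 × Fin 7, X ij.1 ij.2 ≠ 0) ∧
          ∃ e : (Fin 3 ⊕ Fin 7) ≃ Fin 10,
            A = Matrix.reindex e e (Matrix.fromBlocks (Cmat 3) X 0 (Cmat 7))) ∨
      (∃ X : Matrix (Fin 7) (Fin 3) ℕ, IsZO X ∧
          (∃! ij : Fin 7 × Fin 3, X ij.1 ij.2 ≠ 0) ∧
          ∃ e : (Fin 7 ⊕ Fin 3) ≃ Fin 10,
            A = Matrix.reindex e e (Matrix.fromBlocks (Cmat 7) X 0 (Cmat 3))) ∨
      (∃ (u : Fin 4 → ℕ) (v : Fin 5 → ℕ),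
          (∀ a, u a ≤ 1) ∧ (∀ b, v b ≤ 1) ∧
          (∃! a, u a ≠ 0) ∧ (∃! b, v b ≠ 0) ∧
          ∃ e : (Fin 4 ⊕ Unit ⊕ Fin 5) ≃ Fin 10,
            A = Matrix.reindex e e (Hmat 4 5 u v)) ∨
      (∃ (u : Fin 5 → ℕ) (v : Fin 4 → ℕ),
          (∀ a, u a ≤ 1) ∧ (∀ b, v b ≤ 1) ∧
          (∃! a, u a ≠ 0) ∧ (∃! b, v b ≠ 0) ∧
          ∃ e : (Fin 5 ⊕ Unit ⊕ Fin 4) ≃ Fin 10,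
            A = Matrix.reindex e e (Hmat 5 4 u v))) := by
  refine ⟨rfl, ?_⟩
  have hmain := stmt_2_general (by simp) hA
  simp only [Fintype.card_fin, starCond_ten, or_and_right, exists_or, and_assoc, exists_and_left,
    exists_eq_left, true_and, or_assoc] at hmain
  exact hmain
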